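/- Let 𝚫 ∈ 𝒜. Then 𝚫 has no branch relations if and only if there exists a gentle quiver 𝚫'' of tree type, all of whose relations are isolated, such that 𝚫 is isomorphic (as a quiver with relations) to the quiver obtained from 𝚫'' by completing all of its relations. -/

import Mathlib

/-! Common formalization infrastructure for gentle quivers (Bobinski–Buan,
    "Derived equivalence classification of gentle cluster tilted algebras"). -/

/-- A (finite) quiver with (length-two, monomial) relations.  Vertices and
arrows are natural numbers; `V` and `A` are the finite sets of vertices and
arrows, `src`/`tgt` give the start and terminus of each arrow, and `rel` is the
set of relations, a relation `(a, b)` standing for the length-two path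
`a·b` (so `src a = tgt b`). -/
structure QuivRel where
  V : Finset ℕ
  A : Finset ℕ
  src : ℕ → ℕ
  tgt : ℕ → ℕ
  rel : Finset (ℕ × ℕ)

namespace GentleQuiv

/-- Two vertices are adjacent if some arrow joins them (in either direction). -/
def Adj (Q : QuivRel) (x y : ℕ) : Prop :=
  ∃ a ∈ Q.A, (Q.src a = x ∧ Q.tgt a = y) ∨ (Q.src a = y ∧ Q.tgt a = x)

/-- A quiver is connected if any two of its vertices are joined by a walk. -/
def Connected (Q : QuivRel) : Prop :=
  ∀ x ∈ Q.V, ∀ y ∈ Q.V, Relation.ReflTransGen (Adj Q) x y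

/-- `l = [α₁, …, αₙ]` is a (nonempty) path in the quiver: consecutive arrows
compose, i.e. `s αᵢ = t αᵢ₊₁`. -/
def IsPathList (Q : QuivRel) (l : List ℕ) : Prop :=
  l ≠ [] ∧ (∀ a ∈ l, a ∈ Q.A) ∧ l.Chain' (fun a b => Q.src a = Q.tgt b)

/-- The path `l` contains a subpath (two consecutive arrows) lying in `R`. -/
def HasRelSubpath (Q : QuivRel) (l : List ℕ) : Prop :=
  ∃ a b, (a, b) ∈ Q.rel ∧ [a, b] <:+: l

/-- Gentle quiver: connected, relations are composable pairs of arrows, at most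
two arrows in/out of every vertex, the usual gentleness conditions on
relations, and a global bound forcing finite dimensionality. -/
def IsGentle (Q : QuivRel) : Prop :=
  Q.V.Nonempty ∧
  (∀ a ∈ Q.A, Q.src a ∈ Q.V ∧ Q.tgt a ∈ Q.V) ∧
  Connected Q ∧
  (∀ ρ ∈ Q.rel, ρ.1 ∈ Q.A ∧ ρ.2 ∈ Q.A ∧ Q.src ρ.1 = Q.tgt ρ.2) ∧
  (∀ x, (Q.A.filter fun a => Q.src a = x).card ≤ 2) ∧
  (∀ x, (Q.A.filter fun a => Q.tgt a = x).card ≤ 2) ∧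
  (∀ a ∈ Q.A, (Q.A.filter fun b => Q.src b = Q.tgt a ∧ (b, a) ∉ Q.rel).card ≤ 1) ∧
  (∀ a ∈ Q.A, (Q.A.filter fun c => Q.tgt c = Q.src a ∧ (a, c) ∉ Q.rel).card ≤ 1) ∧
  (∀ a ∈ Q.A, (Q.A.filter fun b => (b, a) ∈ Q.rel).card ≤ 1) ∧
  (∀ a ∈ Q.A, (Q.A.filter fun c => (a, c) ∈ Q.rel).card ≤ 1) ∧
  (∃ n : ℕ, ∀ l : List ℕ, IsPathList Q l → l.length = n → HasRelSubpath Q l)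

/-- A choice of functions `σ, τ : Δ₁ → {±1}` as in Avella-Alaminos–Geiss. -/
structure SigmaTau (Q : QuivRel) where
  σ : ℕ → ℤ
  τ : ℕ → ℤ
  σ_pm : ∀ a ∈ Q.A, σ a = 1 ∨ σ a = -1
  τ_pm : ∀ a ∈ Q.A, τ a = 1 ∨ τ a = -1
  σ_src : ∀ a ∈ Q.A, ∀ b ∈ Q.A, a ≠ b → Q.src a = Q.src b → σ a = -σ b
  τ_tgt : ∀ a ∈ Q.A, ∀ b ∈ Q.A, a ≠ b → Q.tgt a = Q.tgt b → τ a = -τ b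
  rel_iff : ∀ a ∈ Q.A, ∀ b ∈ Q.A, Q.src a = Q.tgt b → ((a, b) ∈ Q.rel ↔ σ a = τ b)

/-- A thread: either a trivial path/antipath `1_{x,ε}` at a vertex `x` with a
sign `ε`, or a sequence of arrows of positive length. -/
inductive Thread where
  | triv (x : ℕ) (ε : ℤ) : Thread
  | arrows (l : List ℕ) : Thread
deriving DecidableEq

/-- Source of a thread. -/
def Thread.source (Q : QuivRel) : Thread → ℕ
  | .triv x _ => x
  | .arrows l => Q.src l.getLast!

/-- Target of a thread. -/
def Thread.target (Q : QuivRel) : Thread → ℕ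
  | .triv x _ => x
  | .arrows l => Q.tgt l.head!

/-- `σω` (for paths and antipaths alike; `σ 1_{x,ε} = ε = σ 1'_{x,ε}`). -/
def Thread.sigma {Q : QuivRel} (st : SigmaTau Q) : Thread → ℤ
  | .triv _ ε => ε
  | .arrows l => st.σ l.getLast!

/-- `τω` when `ω` is regarded as a path (`τ 1_{x,ε} = -ε`). -/
def Thread.tauPath {Q : QuivRel} (st : SigmaTau Q) : Thread → ℤ
  | .triv _ ε => -ε
  | .arrows l => st.τ l.head!

/-- `τω` when `ω` is regarded as an antipath (`τ 1'_{x,ε} = ε`). -/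
def Thread.tauAnti {Q : QuivRel} (st : SigmaTau Q) : Thread → ℤ
  | .triv _ ε => ε
  | .arrows l => st.τ l.head!

/-- Length of a thread. -/
def Thread.len : Thread → ℕ
  | .triv _ _ => 0
  | .arrows l => l.length

/-- A path in `𝚫` of positive length (no two consecutive arrows in `R`). -/
def IsPermList (Q : QuivRel) (l : List ℕ) : Prop :=
  IsPathList Q l ∧ l.Chain' (fun a b => (a, b) ∉ Q.rel)

/-- An antipath in `𝚫` of positive length (all consecutive pairs in `R`). -/
def IsAntiList (Q : QuivRel) (l : List ℕ) : Prop :=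
  l ≠ [] ∧ (∀ a ∈ l, a ∈ Q.A) ∧ l.Chain' (fun a b => (a, b) ∈ Q.rel)

/-- A thread is a path in `𝚫` (including trivial ones). -/
def IsPathThread (Q : QuivRel) : Thread → Prop
  | .triv x ε => x ∈ Q.V ∧ (ε = 1 ∨ ε = -1)
  | .arrows l => IsPermList Q l

/-- A thread is an antipath in `𝚫` (including trivial ones). -/
def IsAntiThread (Q : QuivRel) : Thread → Prop
  | .triv x ε => x ∈ Q.V ∧ (ε = 1 ∨ ε = -1)
  | .arrows l => IsAntiList Q l

/-- `w ∈ ℳ`: `w` is a maximal path of `𝚫`. -/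
def InM (Q : QuivRel) (st : SigmaTau Q) (w : Thread) : Prop :=
  IsPathThread Q w ∧
  (¬ ∃ a ∈ Q.A, Q.src a = w.target Q ∧ st.σ a = -(w.tauPath st)) ∧
  (¬ ∃ b ∈ Q.A, Q.tgt b = w.source Q ∧ st.τ b = -(w.sigma st))

/-- `w ∈ 𝒩`: `w` is a maximal antipath of `𝚫`. -/
def InN (Q : QuivRel) (st : SigmaTau Q) (w : Thread) : Prop :=
  IsAntiThread Q w ∧
  (¬ ∃ a ∈ Q.A, Q.src a = w.target Q ∧ st.σ a = w.tauAnti st) ∧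
  (¬ ∃ b ∈ Q.A, Q.tgt b = w.source Q ∧ st.τ b = w.sigma st)

/-- The graph of the bijection `Φ = φ ∘ ψ : 𝒩 → 𝒩`:  `PhiRel Q st w w'` holds
iff `w, w' ∈ 𝒩` and the maximal path `ψ w` (with `s(ψw) = sw`, `σ(ψw) = -σw`)
satisfies `t w' = t (ψ w)` and `τ w' = -τ(ψ w)`, i.e. `w' = φ (ψ w) = Φ w`. -/
def PhiRel (Q : QuivRel) (st : SigmaTau Q) (w w' : Thread) : Prop :=
  InN Q st w ∧ InN Q st w' ∧
  ∃ m : Thread, InM Q st m ∧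
    m.source Q = w.source Q ∧ m.sigma st = -(w.sigma st) ∧
    w'.target Q = m.target Q ∧ w'.tauAnti st = -(m.tauPath st)

/-- `O` is an orbit of the `ℤ`-action on `𝒩` induced by `Φ`. -/
def NOrbit (Q : QuivRel) (st : SigmaTau Q) (O : Set Thread) : Prop :=
  ∃ w, InN Q st w ∧ O = {w' | Relation.EqvGen (PhiRel Q st) w w'}

/-- `p(𝒪) = |𝒪|` for an orbit `𝒪 ∈ 𝒩/ℤ`. -/
noncomputable def pN (O : Set Thread) : ℕ := O.ncard

/-- `q(𝒪) = Σ_{ω ∈ 𝒪} ℓ(ω)` for an orbit `𝒪 ∈ 𝒩/ℤ`. -/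
noncomputable def qN (O : Set Thread) : ℕ := ∑ᶠ w ∈ O, Thread.len w

/-- `a ∈ 𝒞`: the arrow `a` occurs in no maximal antipath. -/
def InC (Q : QuivRel) (st : SigmaTau Q) (a : ℕ) : Prop :=
  a ∈ Q.A ∧ ¬ ∃ l : List ℕ, InN Q st (.arrows l) ∧ a ∈ l

/-- The graph of the bijection `Ψ : 𝒞 → 𝒞`. -/
def PsiRel (Q : QuivRel) (st : SigmaTau Q) (a b : ℕ) : Prop :=
  InC Q st a ∧ InC Q st b ∧ Q.tgt b = Q.src a ∧ st.τ b = st.σ a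

/-- `O` is an orbit of the `ℤ`-action on `𝒞` induced by `Ψ`. -/
def COrbit (Q : QuivRel) (st : SigmaTau Q) (O : Set ℕ) : Prop :=
  ∃ a, InC Q st a ∧ O = {b | Relation.EqvGen (PsiRel Q st) a b}

/-- The Avella-Alaminos–Geiss invariant `f_𝚫 : ℕ² → ℕ`:  `f_𝚫 (p,q)` counts the
orbits `𝒪 ∈ 𝒩/ℤ ⊔ 𝒞/ℤ` with `p(𝒪) = p` and `q(𝒪) = q`. -/
noncomputable def fInv (Q : QuivRel) (st : SigmaTau Q) : ℕ × ℕ → ℕ := fun pq =>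
  {O : Set Thread | NOrbit Q st O ∧ pN O = pq.1 ∧ qN O = pq.2}.ncard +
  {O : Set ℕ | COrbit Q st O ∧ pq.1 = 0 ∧ O.ncard = pq.2}.ncard

/-- `[p, q] : ℕ² → ℕ`, the characteristic function of `{(p, q)}`. -/
def charFn (p q : ℕ) : ℕ × ℕ → ℕ := fun pq => if pq = (p, q) then 1 else 0

/-- Tree type: `|Δ₀| = |Δ₁| + 1`. -/
def TreeType (Q : QuivRel) : Prop := Q.V.card = Q.A.card + 1

/-- Removing a set of arrows (keeping all vertices); relations containing a
removed arrow are discarded. -/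
def deleteArrows (Q : QuivRel) (S : Finset ℕ) : QuivRel where
  V := Q.V
  A := Q.A \ S
  src := Q.src
  tgt := Q.tgt
  rel := Q.rel.filter fun ρ => ρ.1 ∉ S ∧ ρ.2 ∉ S

/-- Branch arrow: removing it disconnects the quiver. -/
def BranchArrow (Q : QuivRel) (a : ℕ) : Prop :=
  a ∈ Q.A ∧ ¬ Connected (deleteArrows Q {a})

/-- Cycle arrow: removing it leaves the quiver connected. -/
def CycleArrow (Q : QuivRel) (a : ℕ) : Prop :=
  a ∈ Q.A ∧ Connected (deleteArrows Q {a})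

/-- Branch relation: a relation one of whose arrows is a branch arrow. -/
def BranchRel (Q : QuivRel) (ρ : ℕ × ℕ) : Prop :=
  ρ ∈ Q.rel ∧ (BranchArrow Q ρ.1 ∨ BranchArrow Q ρ.2)

/-- A relation `ρ = (α, β)` is isolated if the antipath `(α, β)` is a maximal
antipath, i.e. `ρ ∈ 𝒩`. -/
def Isolated (Q : QuivRel) (st : SigmaTau Q) (ρ : ℕ × ℕ) : Prop :=
  ρ ∈ Q.rel ∧ InN Q st (.arrows [ρ.1, ρ.2])

/-- `Q'` is obtained from `Q` by completing the relations from `R₀`, the new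
arrow attached to `ρ ∈ R₀` being `γ ρ`. -/
structure IsCompletion (Q : QuivRel) (R0 : Finset (ℕ × ℕ)) (γ : ℕ × ℕ → ℕ)
    (Q' : QuivRel) : Prop where
  subset : R0 ⊆ Q.rel
  fresh : ∀ ρ ∈ R0, γ ρ ∉ Q.A
  inj : ∀ ρ ∈ R0, ∀ ρ' ∈ R0, γ ρ = γ ρ' → ρ = ρ'
  V_eq : Q'.V = Q.V
  A_eq : Q'.A = Q.A ∪ R0.image γ
  src_old : ∀ a ∈ Q.A, Q'.src a = Q.src a
  tgt_old : ∀ a ∈ Q.A, Q'.tgt a = Q.tgt a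
  src_new : ∀ ρ ∈ R0, Q'.src (γ ρ) = Q.tgt ρ.1
  tgt_new : ∀ ρ ∈ R0, Q'.tgt (γ ρ) = Q.src ρ.2
  rel_eq : Q'.rel = Q.rel ∪ R0.image (fun ρ => (γ ρ, ρ.1)) ∪
      R0.image (fun ρ => (ρ.2, γ ρ))

/-- A 3-cycle: three pairwise distinct arrows forming an oriented cycle. -/
def Is3Cycle (Q : QuivRel) (a0 a1 a2 : ℕ) : Prop :=
  a0 ∈ Q.A ∧ a1 ∈ Q.A ∧ a2 ∈ Q.A ∧ a0 ≠ a1 ∧ a1 ≠ a2 ∧ a0 ≠ a2 ∧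
  Q.src a0 = Q.tgt a1 ∧ Q.src a1 = Q.tgt a2 ∧ Q.src a2 = Q.tgt a0

/-- A triangle: a 3-cycle all of whose three compositions are relations. -/
def IsTriangleTriple (Q : QuivRel) (a0 a1 a2 : ℕ) : Prop :=
  Is3Cycle Q a0 a1 a2 ∧ (a0, a1) ∈ Q.rel ∧ (a1, a2) ∈ Q.rel ∧ (a2, a0) ∈ Q.rel

/-- The (unordered) set of arrows of a triangle. -/
def TriangleSet (Q : QuivRel) (O : Finset ℕ) : Prop :=
  ∃ a0 a1 a2, O = {a0, a1, a2} ∧ IsTriangleTriple Q a0 a1 a2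

/-- Branch triangle: removing any two of its arrows disconnects the quiver. -/
def BranchTriangle (Q : QuivRel) (O : Finset ℕ) : Prop :=
  TriangleSet Q O ∧ ∀ S ⊆ O, S.card = 2 → ¬ Connected (deleteArrows Q S)

/-- Free relation: a relation neither of whose arrows lies in `𝒞`. -/
def FreeRel (Q : QuivRel) (st : SigmaTau Q) (ρ : ℕ × ℕ) : Prop :=
  ρ ∈ Q.rel ∧ ¬ InC Q st ρ.1 ∧ ¬ InC Q st ρ.2

/-- The class `𝒜`: gentle quivers with `f_𝚫 = m·[0,3] + [p+m+2, p]`. -/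
def ClassA (Q : QuivRel) (st : SigmaTau Q) : Prop :=
  IsGentle Q ∧ ∃ m p : ℕ, ∀ x, fInv Q st x = m * charFn 0 3 x + charFn (p + m + 2) p x

/-- The class `Ã`: gentle quivers with
`f_𝚫 = (m₁+m₂)·[0,3] + [p+m₁, p] + [q+m₂, q]`, `p+m₁ > 0`, `q+m₂ > 0`. -/
def ClassAtilde (Q : QuivRel) (st : SigmaTau Q) : Prop :=
  IsGentle Q ∧ ∃ m1 m2 p q : ℕ, 0 < p + m1 ∧ 0 < q + m2 ∧
    ∀ x, fInv Q st x =
      (m1 + m2) * charFn 0 3 x + charFn (p + m1) p x + charFn (q + m2) q x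

/-- Isomorphism of quivers with relations. -/
def IsoQR (Q Q' : QuivRel) : Prop :=
  ∃ fV fA : ℕ → ℕ,
    Set.BijOn fV ↑Q.V ↑Q'.V ∧ Set.BijOn fA ↑Q.A ↑Q'.A ∧
    (∀ a ∈ Q.A, Q'.src (fA a) = fV (Q.src a) ∧ Q'.tgt (fA a) = fV (Q.tgt a)) ∧
    (∀ a ∈ Q.A, ∀ b ∈ Q.A, ((a, b) ∈ Q.rel ↔ (fA a, fA b) ∈ Q'.rel))

/-- The quiver has no loops. -/
def NoLoops (Q : QuivRel) : Prop := ∀ a ∈ Q.A, Q.src a ≠ Q.tgt a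

/-- The reflection at `x` is defined: every arrow starting at `x` admits a
(necessarily unique) companion arrow ending at `x` not bound by a relation. -/
def CanReflect (Q : QuivRel) (x : ℕ) : Prop :=
  x ∈ Q.V ∧ ∀ a ∈ Q.A, Q.src a = x → ∃ b ∈ Q.A, Q.tgt b = x ∧ (a, b) ∉ Q.rel

/-- `Q'` is the reflection of the gentle loop-free quiver `Q` at the vertex
`x`, following Brenner–Butler tilting. -/
def IsReflection (Q : QuivRel) (x : ℕ) (Q' : QuivRel) : Prop :=
  IsGentle Q ∧ NoLoops Q ∧ CanReflect Q x ∧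
  Q'.V = Q.V ∧ Q'.A = Q.A ∧
  (∀ a ∈ Q.A, Q.tgt a = x → Q'.src a = x ∧ Q'.tgt a = Q.src a) ∧
  (∀ a ∈ Q.A, Q.src a = x →
    ∀ b ∈ Q.A, Q.tgt b = x → (a, b) ∉ Q.rel → Q'.src a = Q.src b) ∧
  (∀ a ∈ Q.A, Q.tgt a ≠ x → Q.src a ≠ x → Q'.src a = Q.src a) ∧
  (∀ a ∈ Q.A, Q.tgt a ≠ x →
    ((∃ b ∈ Q.A, Q.tgt b = x ∧ Q.src b = Q.tgt a ∧ (b, a) ∈ Q.rel) → Q'.tgt a = x) ∧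
    ((¬ ∃ b ∈ Q.A, Q.tgt b = x ∧ Q.src b = Q.tgt a ∧ (b, a) ∈ Q.rel) →
      Q'.tgt a = Q.tgt a)) ∧
  (∀ a b : ℕ, (a, b) ∈ Q'.rel ↔
    (((a, b) ∈ Q.rel ∧ Q.tgt a ≠ x ∧ Q.src a ≠ x) ∨
     (a ∈ Q.A ∧ b ∈ Q.A ∧ Q.src a = x ∧ Q.tgt b = x ∧ (a, b) ∉ Q.rel) ∨
     (a ∈ Q.A ∧ b ∈ Q.A ∧ Q.tgt a = x ∧
       ∃ c ∈ Q.A, c ≠ a ∧ Q.tgt c = x ∧ Q.src c = Q.tgt b ∧ (c, b) ∈ Q.rel)))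

/-- The opposite quiver with relations. -/
def opQR (Q : QuivRel) : QuivRel where
  V := Q.V
  A := Q.A
  src := Q.tgt
  tgt := Q.src
  rel := Q.rel.image fun ρ => (ρ.2, ρ.1)

/-- Coreflection: the dual of reflection. -/
def IsCoreflection (Q : QuivRel) (x : ℕ) (Q' : QuivRel) : Prop :=
  IsReflection (opQR Q) x (opQR Q')

/-- One step of reflection equivalence: a reflection, a coreflection, or an
isomorphism of quivers with relations. -/
def RefStep (Q Q' : QuivRel) : Prop :=
  (∃ x, IsReflection Q x Q') ∨ (∃ x, IsCoreflection Q x Q') ∨ IsoQR Q Q'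

/-- Reflection equivalence: a finite sequence of reflections/coreflections,
up to isomorphism of quivers with relations. -/
def RefEquiv : QuivRel → QuivRel → Prop := Relation.ReflTransGen RefStep

/-- A cyclic orientation of a `1`-cycle quiver without branch arrows (i.e. a
cycle): enumerations of the vertices and arrows by `ZMod n` such that the
`i`-th arrow joins the `i`-th and `(i+1)`-st vertices. -/
structure CyclicOrientation (Q : QuivRel) (n : ℕ) where
  ev : ZMod n → ℕ
  ea : ZMod n → ℕ
  ev_mem : ∀ i, ev i ∈ Q.V
  ea_mem : ∀ i, ea i ∈ Q.A
  ev_inj : Function.Injective ev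
  ea_inj : Function.Injective ea
  ev_surj : ∀ v ∈ Q.V, ∃ i, ev i = v
  ea_surj : ∀ a ∈ Q.A, ∃ i, ea i = a
  compat : ∀ i : ZMod n,
    (Q.src (ea i) = ev i ∧ Q.tgt (ea i) = ev (i + 1)) ∨
    (Q.src (ea i) = ev (i + 1) ∧ Q.tgt (ea i) = ev i)

/-- Clockwise arrow with respect to a cyclic orientation. -/
def Clockwise (Q : QuivRel) {n : ℕ} (co : CyclicOrientation Q n) (a : ℕ) : Prop :=
  a ∈ Q.A ∧ ∃ i : ZMod n, co.ea i = a ∧ Q.src a = co.ev i ∧ Q.tgt a = co.ev (i + 1)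

/-- Anticlockwise arrow with respect to a cyclic orientation. -/
def Anticlockwise (Q : QuivRel) {n : ℕ} (co : CyclicOrientation Q n) (a : ℕ) : Prop :=
  a ∈ Q.A ∧ ∃ i : ZMod n, co.ea i = a ∧ Q.src a = co.ev (i + 1) ∧ Q.tgt a = co.ev i

end GentleQuiv

namespace GentleQuiv

/-!
Sending a maximal antipath to its target and sign `τ`, and an arrow to its source and sign `σ`,
embeds `𝒩 ⊔ Δ₁` into `Δ₀ × {±1}`, whence `|𝒩| + |Δ₁| ≤ 2|Δ₀|`. Moreover every arrow lies in `𝒞` or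
on a maximal antipath. If `f = m·[0,3] + [p+m+2, p]`, then `𝒞` consists of `m` orbits of length `3`,
which are triangles, while `|𝒩| = p + m + 2` and the maximal antipaths have total length `p`.
Together this gives `|Δ₁| + 1 ≤ |Δ₀| + t`, where `t` is the number of triangles.

Conversely, deleting one arrow from each triangle leaves a connected quiver, and so
`|Δ₁| - t ≥ |Δ₀| - 1`. Hence this deletion produces a tree, and an arrow outside all triangles is a
branch arrow, since otherwise deleting it as well would contradict the two inequalities. So there
are no branch relations if and only if every relation belongs to a triangle. Every completion of
all relations of a gentle quiver with isolated relations has this property, and a gentle quiver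
with this property is recovered from such a deletion by completing the remaining relations.
-/

section Relation

variable {α β : Type*} {r : α → α → Prop}

/-- The class of `a` under the equivalence relation generated by `r`: the orbits of `Φ` and `Ψ` are
the classes of their graphs `PhiRel` and `PsiRel`. -/
def eqvClass (r : α → α → Prop) (a : α) : Set α := {b | Relation.EqvGen r a b}

lemma mem_eqvClass_self (a : α) : a ∈ eqvClass r a := Relation.EqvGen.refl a

lemma eqvClass_eq_of_mem {a b : α} (h : b ∈ eqvClass r a) : eqvClass r b = eqvClass r a :=
  Set.ext fun _ => ⟨h.trans _ _ _, (h.symm _ _).trans _ _ _⟩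

lemma eqvClass_subset {X : Set α} {a : α} (hX : ∀ u v, r u v → (u ∈ X ↔ v ∈ X)) (ha : a ∈ X) :
    eqvClass r a ⊆ X := by
  have hequiv : Equivalence fun u v => u ∈ X ↔ v ∈ X :=
    ⟨fun _ => Iff.rfl, fun h => h.symm, fun h h' => h.trans h'⟩
  exact fun b hb => (hequiv.eqvGen_iff.1 (hb.mono hX)).1 ha

lemma exists_three_cycle_of_ncard_eqvClass (hl : Relator.LeftUnique r) (hr : Relator.RightUnique r)
    {a : α} (hsucc : ∀ x ∈ eqvClass r a, ∃ y, r x y) (hcard : (eqvClass r a).ncard = 3) :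
    ∃ b c, r a b ∧ r b c ∧ r c a ∧ a ≠ b ∧ b ≠ c ∧ a ≠ c := by
  have hmem : ∀ {x y}, x ∈ eqvClass r a → r x y → y ∈ eqvClass r a :=
    fun hx hxy => hx.trans _ _ _ (.rel _ _ hxy)
  have hfin : (eqvClass r a).Finite := Set.finite_of_ncard_pos (by omega)
  have ha := mem_eqvClass_self (r := r) a
  obtain ⟨b, hab⟩ := hsucc a ha
  have hb := hmem ha hab
  obtain ⟨c, hbc⟩ := hsucc b hb
  have hc := hmem hb hbc
  obtain ⟨d, hcd⟩ := hsucc c hc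
  have hac' : a ≠ c := by
    rintro rfl
    have hsub : eqvClass r a ⊆ {a, b} := by
      refine eqvClass_subset (fun u v huv => ?_) (Set.mem_insert _ _)
      simp only [Set.mem_insert_iff, Set.mem_singleton_iff]
      constructor
      · rintro (rfl | rfl)
        · exact Or.inr (hr huv hab)
        · exact Or.inl (hr huv hbc)
      · rintro (rfl | rfl)
        · exact Or.inr (hl huv hbc)
        · exact Or.inl (hl huv hab)
    have := Set.ncard_le_ncard hsub (Set.toFinite _)
    have := Set.ncard_insert_le a {b}
    rw [Set.ncard_singleton] at this
    omega
  have hab' : a ≠ b := by rintro rfl; exact hac' (hr hab hbc)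
  have hbc' : b ≠ c := by rintro rfl; exact hab' (hl hab hbc)
  have hda : d = a := by
    by_contra hda
    have hsub : {a, b, c, d} ⊆ eqvClass r a := by
      simp [Set.insert_subset_iff, ha, hb, hc, hmem hc hcd]
    have hbd : b ≠ d := by rintro rfl; exact hac' (hl hab hcd)
    have hcd' : c ≠ d := by rintro rfl; exact hbc' (hl hbc hcd)
    have := Set.ncard_le_ncard hsub hfin
    rw [Set.ncard_insert_of_notMem (by simp [hab', hac', Ne.symm hda]),
      Set.ncard_insert_of_notMem (by simp [hbc', hbd]), Set.ncard_pair hcd'] at this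
    omega
  exact ⟨b, c, hab, hbc, hda ▸ hcd, hab', hbc', hac'⟩

lemma ncard_le_mul_ncard_image_eqvClass {X : Set α} {n : ℕ} (hX : X.Finite)
    (hsub : ∀ a ∈ X, eqvClass r a ⊆ X) (hn : ∀ a ∈ X, (eqvClass r a).ncard ≤ n) :
    X.ncard ≤ n * (eqvClass r '' X).ncard := by
  classical
  lift X to Finset α using hX
  rw [← Finset.coe_image, Set.ncard_coe_finset, Set.ncard_coe_finset]
  refine Finset.card_le_mul_card_image X n fun O hO => ?_
  obtain ⟨a, ha, rfl⟩ := Finset.mem_image.1 hO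
  refine le_trans ?_ (hn a ha)
  rw [← Set.ncard_coe_finset]
  refine Set.ncard_le_ncard (fun b hb => ?_) (X.finite_toSet.subset (hsub a ha))
  exact (Finset.mem_filter.1 hb).2 ▸ mem_eqvClass_self b

lemma eq_of_isChain_of_head?_eq (hr : Relator.RightUnique r) {l l' : List α} (hl : l.IsChain r)
    (hl' : l'.IsChain r) (hhead : l.head? = l'.head?) (hlast : ∀ x ∈ l.getLast?, ∀ y, ¬ r x y)
    (hlast' : ∀ x ∈ l'.getLast?, ∀ y, ¬ r x y) : l = l' := by
  induction l generalizing l' with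
  | nil => exact (List.head?_eq_none_iff.1 hhead.symm).symm
  | cons a l ih =>
    obtain ⟨t, rfl⟩ := List.head?_eq_some_iff.1 hhead.symm
    match l, t with
    | [], [] => rfl
    | [], c :: t => exact absurd (List.isChain_cons_cons.1 hl').1 (hlast a rfl c)
    | b :: l, [] => exact absurd (List.isChain_cons_cons.1 hl).1 (hlast' a rfl b)
    | b :: l, c :: t =>
      rw [List.isChain_cons_cons] at hl hl'
      rw [List.getLast?_cons_cons] at hlast hlast'
      rw [ih hl.2 hl'.2 (congrArg some (hr hl.1 hl'.1)) hlast hlast']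

lemma nodup_of_isChain (hr : Relator.RightUnique r) {l : List α} (hl : l.IsChain r)
    (hlast : ∀ x ∈ l.getLast?, ∀ y, ¬ r x y) : l.Nodup := by
  induction l with
  | nil => exact List.nodup_nil
  | cons a l ih =>
    have hsuffix : ∀ t, t ≠ [] → t <:+ a :: l → ∀ x ∈ t.getLast?, ∀ y, ¬ r x y := by
      rintro t ht ⟨s, hs⟩
      rwa [← hs, List.getLast?_append_of_ne_nil _ ht] at hlast
    refine List.nodup_cons.2 ⟨fun ha => ?_, ?_⟩
    · obtain ⟨s, t, rfl⟩ := List.append_of_mem ha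
      have hat : a :: t <:+ a :: (s ++ a :: t) := ⟨a :: s, rfl⟩
      have := congrArg List.length <| eq_of_isChain_of_head?_eq hr hl (hl.suffix hat) rfl hlast
        (hsuffix _ (List.cons_ne_nil _ _) hat)
      simp only [List.length_cons, List.length_append] at this
      omega
    · rcases eq_or_ne l [] with rfl | hne
      · exact List.nodup_nil
      · exact ih hl.tail (hsuffix l hne (List.suffix_cons a l))

lemma ncard_eq_of_ncard_fiber {X : Set α} (hX : X.Finite) {f : α → β} {b₀ : β} {k : ℕ}
    (h₀ : {x | x ∈ X ∧ f x = b₀}.ncard = k) (h : ∀ b ≠ b₀, {x | x ∈ X ∧ f x = b}.ncard = 0) :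
    X.ncard = k ∧ ∀ x ∈ X, f x = b₀ := by
  have hf : ∀ x ∈ X, f x = b₀ := by
    intro x hx
    by_contra hne
    have hempty := (Set.ncard_eq_zero (hX.subset fun _ h => h.1)).1 (h (f x) hne)
    exact Set.notMem_empty x (hempty ▸ ⟨hx, rfl⟩)
  exact ⟨by rw [← h₀, Set.sep_eq_self_iff_mem_true.2 hf], hf⟩

end Relation

section Gentle

variable {Q : QuivRel} {a b : ℕ}

lemma IsGentle.src_mem (hg : IsGentle Q) (ha : a ∈ Q.A) : Q.src a ∈ Q.V := (hg.2.1 a ha).1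

lemma IsGentle.tgt_mem (hg : IsGentle Q) (ha : a ∈ Q.A) : Q.tgt a ∈ Q.V := (hg.2.1 a ha).2

lemma IsGentle.connected (hg : IsGentle Q) : Connected Q := hg.2.2.1

lemma IsGentle.mem_and_mem_and_src_eq_of_rel (hg : IsGentle Q) (h : (a, b) ∈ Q.rel) :
    a ∈ Q.A ∧ b ∈ Q.A ∧ Q.src a = Q.tgt b :=
  hg.2.2.2.1 (a, b) h

lemma IsGentle.rel_leftUnique (hg : IsGentle Q) : Relator.LeftUnique fun a b => (a, b) ∈ Q.rel := by
  intro a a' b h h'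
  obtain ⟨ha, hb, -⟩ := hg.mem_and_mem_and_src_eq_of_rel h
  obtain ⟨ha', -, -⟩ := hg.mem_and_mem_and_src_eq_of_rel h'
  obtain ⟨-, -, -, -, -, -, -, -, hcard, -, -⟩ := hg
  exact Finset.card_le_one.1 (hcard b hb) a (Finset.mem_filter.2 ⟨ha, h⟩)
    a' (Finset.mem_filter.2 ⟨ha', h'⟩)

lemma IsGentle.rel_rightUnique (hg : IsGentle Q) :
    Relator.RightUnique fun a b => (a, b) ∈ Q.rel := by
  intro a b b' h h'
  obtain ⟨ha, hb, -⟩ := hg.mem_and_mem_and_src_eq_of_rel h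
  obtain ⟨-, hb', -⟩ := hg.mem_and_mem_and_src_eq_of_rel h'
  obtain ⟨-, -, -, -, -, -, -, -, -, hcard, -⟩ := hg
  exact Finset.card_le_one.1 (hcard a ha) b (Finset.mem_filter.2 ⟨hb, h⟩)
    b' (Finset.mem_filter.2 ⟨hb', h'⟩)

lemma SigmaTau.rel_iff_of_isGentle (st : SigmaTau Q) (hg : IsGentle Q) :
    (a, b) ∈ Q.rel ↔ a ∈ Q.A ∧ b ∈ Q.A ∧ Q.src a = Q.tgt b ∧ st.σ a = st.τ b := by
  constructor
  · intro h
    obtain ⟨ha, hb, hab⟩ := hg.mem_and_mem_and_src_eq_of_rel h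
    exact ⟨ha, hb, hab, (st.rel_iff a ha b hb hab).1 h⟩
  · rintro ⟨ha, hb, hab, hsign⟩
    exact (st.rel_iff a ha b hb hab).2 hsign

lemma SigmaTau.eq_of_src_eq (st : SigmaTau Q) (ha : a ∈ Q.A) (hb : b ∈ Q.A)
    (hsrc : Q.src a = Q.src b) (hσ : st.σ a = st.σ b) : a = b := by
  by_contra hne
  have := st.σ_src a ha b hb hne hsrc
  have := st.σ_pm b hb
  omega

lemma SigmaTau.eq_of_tgt_eq (st : SigmaTau Q) (ha : a ∈ Q.A) (hb : b ∈ Q.A)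
    (htgt : Q.tgt a = Q.tgt b) (hτ : st.τ a = st.τ b) : a = b := by
  by_contra hne
  have := st.τ_tgt a ha b hb hne htgt
  have := st.τ_pm b hb
  omega

end Gentle

/-! ### Maximal antipaths -/

section Antipath

variable {Q : QuivRel} {a : ℕ} {w w' : Thread}

lemma inN_arrows_iff (hg : IsGentle Q) (st : SigmaTau Q) {l : List ℕ} :
    InN Q st (.arrows l) ↔ IsAntiList Q l ∧ (∀ a ∈ l.head?, ∀ x, (x, a) ∉ Q.rel) ∧
      ∀ a ∈ l.getLast?, ∀ x, (a, x) ∉ Q.rel := by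
  refine and_congr_right fun ⟨hne, hA, _⟩ => ?_
  have hhead : l.head? = some l.head! := by
    rw [List.head!_of_head? (List.head?_eq_some_head hne), List.head?_eq_some_head hne]
  have hlast : l.getLast? = some l.getLast! := by
    rw [List.getLast!_of_getLast? (List.getLast?_eq_some_getLast hne),
      List.getLast?_eq_some_getLast hne]
  have hheadA := hA _ (List.mem_of_mem_head? hhead)
  have hlastA := hA _ (List.mem_of_mem_getLast? hlast)
  simp only [Thread.target, Thread.source, Thread.tauAnti, Thread.sigma, hhead, hlast,
    Option.mem_some_iff, forall_eq', st.rel_iff_of_isGentle hg, hheadA, hlastA, true_and,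
    not_exists, eq_comm (a := Q.src l.getLast!), eq_comm (a := st.σ l.getLast!)]

lemma IsAntiList.length_le_card (hg : IsGentle Q) {l : List ℕ} (hl : IsAntiList Q l)
    (hlast : ∀ a ∈ l.getLast?, ∀ x, (a, x) ∉ Q.rel) : l.length ≤ Q.A.card := by
  rw [← List.toFinset_card_of_nodup (nodup_of_isChain hg.rel_rightUnique hl.2.2 hlast)]
  exact Finset.card_le_card fun x hx => hl.2.1 x (List.mem_toFinset.1 hx)

lemma exists_inN_of_forall_notMem_rel (hg : IsGentle Q) (st : SigmaTau Q) (ha : a ∈ Q.A)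
    (hend : ∀ b, (a, b) ∉ Q.rel) : ∃ l, InN Q st (.arrows l) ∧ a ∈ l := by
  by_contra! hnone
  have hlong : ∀ n, ∃ l, IsAntiList Q l ∧ l.getLast? = some a ∧ l.length = n + 1 := by
    intro n
    induction n with
    | zero => exact ⟨[a], ⟨by simp, by simpa using ha, List.isChain_singleton a⟩, rfl, rfl⟩
    | succ n ih =>
      obtain ⟨l, hl, hlast, hlen⟩ := ih
      have hext : ∃ y ∈ l.head?, ∃ x, (x, y) ∈ Q.rel := by
        by_contra! hext
        refine hnone l ((inN_arrows_iff hg st).2 ⟨hl, hext, ?_⟩) (List.mem_of_getLast? hlast)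
        simpa [hlast] using hend
      obtain ⟨y, hy, x, hxy⟩ := hext
      obtain ⟨t, rfl⟩ := List.head?_eq_some_iff.1 hy
      have hx := (hg.mem_and_mem_and_src_eq_of_rel hxy).1
      exact ⟨x :: y :: t, ⟨by simp, List.forall_mem_cons.2 ⟨hx, hl.2.1⟩,
        List.isChain_cons_cons.2 ⟨hxy, hl.2.2⟩⟩, hlast, by simp [hlen]⟩
  obtain ⟨l, hl, hlast, hlen⟩ := hlong Q.A.card
  have := hl.length_le_card hg (by simpa [hlast] using hend)
  omega

lemma InC.exists_rel (hg : IsGentle Q) {st : SigmaTau Q} (ha : InC Q st a) :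
    ∃ b, InC Q st b ∧ (a, b) ∈ Q.rel := by
  have hsucc : ∃ b, (a, b) ∈ Q.rel := by
    by_contra! hend
    exact ha.2 (exists_inN_of_forall_notMem_rel hg st ha.1 hend)
  obtain ⟨b, hab⟩ := hsucc
  refine ⟨b, ⟨(hg.mem_and_mem_and_src_eq_of_rel hab).2.1, ?_⟩, hab⟩
  rintro ⟨l, hl, hbl⟩
  obtain ⟨s, t, rfl⟩ := List.append_of_mem hbl
  obtain ⟨hanti, hhead, -⟩ := (inN_arrows_iff hg st).1 hl
  rcases List.eq_nil_or_concat s with rfl | ⟨s, c, rfl⟩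
  · exact hhead b rfl a hab
  · have hcb : (c, b) ∈ Q.rel :=
      (List.isChain_cons_cons.1 (hanti.2.2.suffix (l₁ := c :: b :: t) ⟨s, by simp⟩)).1
    obtain rfl := hg.rel_leftUnique hab hcb
    exact ha.2 ⟨_, hl, by simp⟩

lemma InN.not_target_eq_of_triv {st : SigmaTau Q} {x : ℕ} {ε : ℤ} {l : List ℕ}
    (h : InN Q st (.triv x ε)) (h' : InN Q st (.arrows l)) :
    ¬ (x = (Thread.arrows l).target Q ∧ ε = (Thread.arrows l).tauAnti st) := by
  rintro ⟨rfl, rfl⟩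
  obtain ⟨a, t, rfl⟩ := List.exists_cons_of_ne_nil h'.1.1
  exact h.2.2 ⟨a, h'.1.2.1 a List.mem_cons_self, rfl, rfl⟩

lemma InN.eq_of_target_eq (hg : IsGentle Q) {st : SigmaTau Q} (h : InN Q st w) (h' : InN Q st w')
    (htgt : w.target Q = w'.target Q) (hτ : w.tauAnti st = w'.tauAnti st) : w = w' := by
  match w, w' with
  | .triv _ _, .triv _ _ => exact congrArg₂ Thread.triv htgt hτ
  | .triv _ _, .arrows _ => exact absurd ⟨htgt, hτ⟩ (h.not_target_eq_of_triv h')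
  | .arrows _, .triv _ _ => exact absurd ⟨htgt.symm, hτ.symm⟩ (h'.not_target_eq_of_triv h)
  | .arrows l, .arrows l' =>
    obtain ⟨⟨hne, hA, hchain⟩, -, hlast⟩ := (inN_arrows_iff hg st).1 h
    obtain ⟨⟨hne', hA', hchain'⟩, -, hlast'⟩ := (inN_arrows_iff hg st).1 h'
    obtain ⟨a, t, rfl⟩ := List.exists_cons_of_ne_nil hne
    obtain ⟨b, t', rfl⟩ := List.exists_cons_of_ne_nil hne'
    have hab : a = b :=
      st.eq_of_tgt_eq (hA a List.mem_cons_self) (hA' b List.mem_cons_self) htgt hτ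
    rw [eq_of_isChain_of_head?_eq hg.rel_rightUnique hchain hchain' (congrArg some hab) hlast
      hlast']

lemma InN.target_mem (hg : IsGentle Q) {st : SigmaTau Q} (h : InN Q st w) :
    (w.target Q, w.tauAnti st) ∈ Q.V ×ˢ ({1, -1} : Finset ℤ) := by
  simp only [Finset.mem_product, Finset.mem_insert, Finset.mem_singleton]
  match w with
  | .triv _ _ => exact h.1
  | .arrows l =>
    obtain ⟨a, t, rfl⟩ := List.exists_cons_of_ne_nil h.1.1
    have ha := h.1.2.1 a List.mem_cons_self
    exact ⟨hg.tgt_mem ha, st.τ_pm a ha⟩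

lemma injOn_target_tauAnti (hg : IsGentle Q) (st : SigmaTau Q) :
    Set.InjOn (fun w => (w.target Q, w.tauAnti st)) {w | InN Q st w} :=
  fun _ h _ h' heq => InN.eq_of_target_eq hg h h' (congrArg Prod.fst heq) (congrArg Prod.snd heq)

lemma finite_setOf_inN (hg : IsGentle Q) (st : SigmaTau Q) : {w | InN Q st w}.Finite :=
  .of_injOn (fun _ h => InN.target_mem hg h) (injOn_target_tauAnti hg st) (Finset.finite_toSet _)

lemma finite_setOf_inC (st : SigmaTau Q) : {a | InC Q st a}.Finite :=
  Q.A.finite_toSet.subset fun _ h => h.1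

-- An arrow `a` excludes the maximal antipath ending at `src a` with sign `σ a`, so the keys
-- `(target, τ)` of the maximal antipaths and `(src, σ)` of the arrows are distinct elements of
-- `V × {±1}`.
lemma ncard_setOf_inN_add_card_A_le (hg : IsGentle Q) (st : SigmaTau Q) :
    {w | InN Q st w}.ncard + Q.A.card ≤ 2 * Q.V.card := by
  let N := (finite_setOf_inN hg st).toFinset
  have hN : ∀ {w}, w ∈ N ↔ InN Q st w := (finite_setOf_inN hg st).mem_toFinset
  let key : Thread ⊕ ℕ → ℕ × ℤ :=
    Sum.elim (fun w => (w.target Q, w.tauAnti st)) fun a => (Q.src a, st.σ a)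
  have hdisj : ∀ {w a}, w ∈ N → a ∈ Q.A → key (.inl w) ≠ key (.inr a) := fun hw ha h =>
    (hN.1 hw).2.1 ⟨_, ha, (congrArg Prod.fst h).symm, (congrArg Prod.snd h).symm⟩
  have hmaps : Set.MapsTo key (N.disjSum Q.A) (Q.V ×ˢ ({1, -1} : Finset ℤ) : Finset (ℕ × ℤ)) := by
    rintro (w | a) hx
    · exact InN.target_mem hg (hN.1 (Finset.inl_mem_disjSum.1 hx))
    · have ha := Finset.inr_mem_disjSum.1 hx
      simpa [key] using ⟨hg.src_mem ha, st.σ_pm a ha⟩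
  have hinj : Set.InjOn key (N.disjSum Q.A) := by
    rintro (w | a) hx (w' | a') hx' h
    all_goals
      simp only [Finset.mem_coe, Finset.inl_mem_disjSum, Finset.inr_mem_disjSum] at hx hx'
    · exact congrArg _ (injOn_target_tauAnti hg st (hN.1 hx) (hN.1 hx') h)
    · exact absurd h (hdisj hx hx')
    · exact absurd h.symm (hdisj hx' hx)
    · exact congrArg _ (st.eq_of_src_eq hx hx' (congrArg Prod.fst h) (congrArg Prod.snd h))
  have hcard := Finset.card_le_card_of_injOn key hmaps hinj
  rw [Finset.card_disjSum, Finset.card_product, Finset.card_pair (by decide), mul_comm] at hcard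
  rwa [Set.ncard_eq_toFinset_card _ (finite_setOf_inN hg st)]

/-- The set of arrows occurring in a thread. -/
def Thread.arrowSet : Thread → Finset ℕ
  | .triv _ _ => ∅
  | .arrows l => l.toFinset

lemma Thread.card_arrowSet_le : ∀ w : Thread, w.arrowSet.card ≤ w.len
  | .triv _ _ => le_rfl
  | .arrows l => l.toFinset_card_le

lemma card_A_le_ncard_setOf_inC_add (hg : IsGentle Q) (st : SigmaTau Q) :
    Q.A.card ≤ {a | InC Q st a}.ncard + ∑ᶠ w ∈ {w | InN Q st w}, w.len := by
  have hN := finite_setOf_inN hg st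
  have hC := finite_setOf_inC st
  have hsub : Q.A ⊆ hC.toFinset ∪ hN.toFinset.biUnion Thread.arrowSet := by
    intro a ha
    by_cases hN' : ∃ l : List ℕ, InN Q st (.arrows l) ∧ a ∈ l
    · obtain ⟨l, hl, hal⟩ := hN'
      exact Finset.mem_union_right _ <| Finset.mem_biUnion.2
        ⟨.arrows l, hN.mem_toFinset.2 hl, List.mem_toFinset.2 hal⟩
    · exact Finset.mem_union_left _ (hC.mem_toFinset.2 ⟨ha, hN'⟩)
  rw [Set.ncard_eq_toFinset_card _ hC, finsum_mem_eq_finite_toFinset_sum _ hN]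
  calc Q.A.card
    _ ≤ hC.toFinset.card + (hN.toFinset.biUnion Thread.arrowSet).card :=
      (Finset.card_le_card hsub).trans (Finset.card_union_le _ _)
    _ ≤ hC.toFinset.card + ∑ w ∈ hN.toFinset, w.len := by
      gcongr
      exact Finset.card_biUnion_le.trans (Finset.sum_le_sum fun w _ => w.card_arrowSet_le)

end Antipath

/-! ### Triangles and deletion of arrows -/

section Triangle

variable {Q : QuivRel} {S : Finset ℕ} {a b c b' c' : ℕ}

lemma IsTriangleTriple.rotate (h : IsTriangleTriple Q a b c) : IsTriangleTriple Q b c a := by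
  obtain ⟨⟨ha, hb, hc, hab, hbc, hac, h₁, h₂, h₃⟩, r₁, r₂, r₃⟩ := h
  exact ⟨⟨hb, hc, ha, hbc, hac.symm, hab.symm, h₂, h₃, h₁⟩, r₂, r₃, r₁⟩

lemma IsGentle.isTriangleTriple (hg : IsGentle Q) (hab : (a, b) ∈ Q.rel) (hbc : (b, c) ∈ Q.rel)
    (hca : (c, a) ∈ Q.rel) (hne : a ≠ b ∧ b ≠ c ∧ a ≠ c) : IsTriangleTriple Q a b c := by
  obtain ⟨ha, hb, hab'⟩ := hg.mem_and_mem_and_src_eq_of_rel hab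
  obtain ⟨-, hc, hbc'⟩ := hg.mem_and_mem_and_src_eq_of_rel hbc
  obtain ⟨-, -, hca'⟩ := hg.mem_and_mem_and_src_eq_of_rel hca
  exact ⟨⟨ha, hb, hc, hne.1, hne.2.1, hne.2.2, hab', hbc', hca'⟩, hab, hbc, hca⟩

lemma IsTriangleTriple.eq_and_eq (hg : IsGentle Q) (h : IsTriangleTriple Q a b c)
    (h' : IsTriangleTriple Q a b' c') : b = b' ∧ c = c' :=
  ⟨hg.rel_rightUnique h.2.1 h'.2.1, hg.rel_leftUnique h.2.2.2 h'.2.2.2⟩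

lemma isTriangleTriple_deleteArrows_iff :
    IsTriangleTriple (deleteArrows Q S) a b c ↔
      IsTriangleTriple Q a b c ∧ a ∉ S ∧ b ∉ S ∧ c ∉ S := by
  simp only [IsTriangleTriple, Is3Cycle, deleteArrows, Finset.mem_sdiff, Finset.mem_filter]
  tauto

lemma reflTransGen_adj_symm {x y : ℕ} (h : Relation.ReflTransGen (Adj Q) x y) :
    Relation.ReflTransGen (Adj Q) y x :=
  have : Std.Symm (Adj Q) := ⟨fun _ _ ⟨a, ha, hxy⟩ => ⟨a, ha, hxy.symm⟩⟩
  symm h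

lemma Connected.deleteArrows_of_reflTransGen (h : Connected Q)
    (hS : ∀ a ∈ Q.A, a ∈ S →
      Relation.ReflTransGen (Adj (deleteArrows Q S)) (Q.src a) (Q.tgt a)) :
    Connected (deleteArrows Q S) := by
  have hadj : Adj Q ≤ Relation.ReflTransGen (Adj (deleteArrows Q S)) := by
    rintro x y ⟨a, ha, hxy⟩
    by_cases haS : a ∈ S
    · rcases hxy with ⟨rfl, rfl⟩ | ⟨rfl, rfl⟩
      · exact hS a ha haS
      · exact reflTransGen_adj_symm (hS a ha haS)
    · exact .single ⟨a, Finset.mem_sdiff.2 ⟨ha, haS⟩, hxy⟩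
  exact fun x hx y hy => Relation.reflTransGen_closed hadj _ _ (h x hx y hy)

lemma IsTriangleTriple.reflTransGen_deleteArrows (h : IsTriangleTriple Q a b c) (hb : b ∉ S)
    (hc : c ∉ S) : Relation.ReflTransGen (Adj (deleteArrows Q S)) (Q.src a) (Q.tgt a) := by
  obtain ⟨⟨-, hbA, hcA, -, -, -, hab, hbc, hca⟩, -⟩ := h
  have hstep_b : Adj (deleteArrows Q S) (Q.src a) (Q.src b) :=
    ⟨b, Finset.mem_sdiff.2 ⟨hbA, hb⟩, Or.inr ⟨rfl, hab.symm⟩⟩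
  have hstep_c : Adj (deleteArrows Q S) (Q.src b) (Q.tgt a) :=
    ⟨c, Finset.mem_sdiff.2 ⟨hcA, hc⟩, Or.inr ⟨hca, hbc.symm⟩⟩
  exact .head hstep_b (.single hstep_c)

lemma IsTriangleTriple.not_branchArrow (hQ : Connected Q) (h : IsTriangleTriple Q a b c) :
    ¬ BranchArrow Q a := by
  refine fun hbr => hbr.2 (hQ.deleteArrows_of_reflTransGen fun x _ hx => ?_)
  obtain rfl := Finset.mem_singleton.1 hx
  exact h.reflTransGen_deleteArrows (by simpa using h.1.2.2.2.1.symm)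
    (by simpa using h.1.2.2.2.2.2.1.symm)

lemma IsGentle.deleteArrows_of_connected (hg : IsGentle Q) (hS : Connected (deleteArrows Q S)) :
    IsGentle (deleteArrows Q S) := by
  obtain ⟨hV, hends, -, hrel, hout, hin, hnl, hnr, hl, hr, n, hn⟩ := hg
  have hA : ∀ {a}, a ∈ (deleteArrows Q S).A → a ∈ Q.A ∧ a ∉ S := Finset.mem_sdiff.1
  have hrel_iff : ∀ {a b}, (a, b) ∈ (deleteArrows Q S).rel ↔ (a, b) ∈ Q.rel ∧ a ∉ S ∧ b ∉ S :=
    Finset.mem_filter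
  have hcard : ∀ {p q : ℕ → Prop} [DecidablePred p] [DecidablePred q] {k : ℕ},
      (∀ a ∈ (deleteArrows Q S).A, p a → q a) → (Q.A.filter q).card ≤ k →
      ((deleteArrows Q S).A.filter p).card ≤ k := fun hpq hk =>
    (Finset.card_le_card fun a ha => Finset.mem_filter.2
      ⟨(hA (Finset.mem_filter.1 ha).1).1, hpq a (Finset.mem_filter.1 ha).1
        (Finset.mem_filter.1 ha).2⟩).trans hk
  refine ⟨hV, fun a ha => hends a (hA ha).1, hS, fun ρ hρ => ?_,
    fun x => hcard (fun _ _ h => h) (hout x), fun x => hcard (fun _ _ h => h) (hin x),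
    fun a ha => hcard (fun b hb h => ?_) (hnl a (hA ha).1),
    fun a ha => hcard (fun b hb h => ?_) (hnr a (hA ha).1),
    fun a ha => hcard (fun b _ h => ?_) (hl a (hA ha).1),
    fun a ha => hcard (fun b _ h => ?_) (hr a (hA ha).1), n, fun l hl hlen => ?_⟩
  · obtain ⟨hρ, h₁, h₂⟩ := hrel_iff.1 hρ
    obtain ⟨ha, hb, hab⟩ := hrel ρ hρ
    exact ⟨Finset.mem_sdiff.2 ⟨ha, h₁⟩, Finset.mem_sdiff.2 ⟨hb, h₂⟩, hab⟩
  · exact ⟨h.1, fun hr => h.2 (hrel_iff.2 ⟨hr, (hA hb).2, (hA ha).2⟩)⟩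
  · exact ⟨h.1, fun hr => h.2 (hrel_iff.2 ⟨hr, (hA ha).2, (hA hb).2⟩)⟩
  · exact (hrel_iff.1 h).1
  · exact (hrel_iff.1 h).1
  · obtain ⟨hne, hmem, hchain⟩ := hl
    obtain ⟨a, b, hab, hsublist⟩ := hn l ⟨hne, fun a ha => (hA (hmem a ha)).1, hchain⟩ hlen
    have hS : ∀ x ∈ [a, b], x ∉ S := fun x hx => (hA (hmem x (hsublist.subset hx))).2
    exact ⟨a, b, hrel_iff.2 ⟨hab, hS a (by simp), hS b (by simp)⟩, hsublist⟩

/-- The restriction of a choice of `σ, τ` to the quiver with the arrows in `S` deleted. -/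
def SigmaTau.restrict (st : SigmaTau Q) (S : Finset ℕ) : SigmaTau (deleteArrows Q S) where
  σ := st.σ
  τ := st.τ
  σ_pm a ha := st.σ_pm a (Finset.mem_sdiff.1 ha).1
  τ_pm a ha := st.τ_pm a (Finset.mem_sdiff.1 ha).1
  σ_src a ha b hb := st.σ_src a (Finset.mem_sdiff.1 ha).1 b (Finset.mem_sdiff.1 hb).1
  τ_tgt a ha b hb := st.τ_tgt a (Finset.mem_sdiff.1 ha).1 b (Finset.mem_sdiff.1 hb).1
  rel_iff a ha b hb hab := by
    rw [← st.rel_iff a (Finset.mem_sdiff.1 ha).1 b (Finset.mem_sdiff.1 hb).1 hab]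
    exact Finset.mem_filter.trans
      (and_iff_left ⟨(Finset.mem_sdiff.1 ha).2, (Finset.mem_sdiff.1 hb).2⟩)

/-- The underlying simple graph of a quiver, without loops and multiple edges. -/
def underlyingGraph (Q : QuivRel) : SimpleGraph Q.V := SimpleGraph.fromRel fun x y => Adj Q x y

lemma ncard_edgeSet_underlyingGraph_le (Q : QuivRel) :
    (underlyingGraph Q).edgeSet.ncard ≤ Q.A.card := by
  have hsub : Sym2.map Subtype.val '' (underlyingGraph Q).edgeSet ⊆
      (fun a => s(Q.src a, Q.tgt a)) '' (Q.A : Set ℕ) := by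
    rintro _ ⟨e, he, rfl⟩
    induction e using Sym2.ind with
    | _ x y =>
      rw [SimpleGraph.mem_edgeSet, underlyingGraph, SimpleGraph.fromRel_adj] at he
      obtain ⟨-, ⟨a, ha, h⟩ | ⟨a, ha, h⟩⟩ := he
      · exact ⟨a, ha, Sym2.eq_iff.2 h⟩
      · exact ⟨a, ha, Sym2.eq_iff.2 h.symm⟩
  calc (underlyingGraph Q).edgeSet.ncard
    _ = (Sym2.map Subtype.val '' (underlyingGraph Q).edgeSet).ncard :=
      (Set.ncard_image_of_injective _ (Sym2.map.injective Subtype.val_injective)).symm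
    _ ≤ ((fun a => s(Q.src a, Q.tgt a)) '' (Q.A : Set ℕ)).ncard :=
      Set.ncard_le_ncard hsub (Q.A.finite_toSet.image _)
    _ ≤ Q.A.card := by
      rw [← Set.ncard_coe_finset]
      exact Set.ncard_image_le Q.A.finite_toSet

lemma connected_underlyingGraph (hV : Q.V.Nonempty)
    (hends : ∀ a ∈ Q.A, Q.src a ∈ Q.V ∧ Q.tgt a ∈ Q.V) (hQ : Connected Q) :
    (underlyingGraph Q).Connected := by
  have hreach : ∀ x : Q.V, ∀ y, Relation.ReflTransGen (Adj Q) x y →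
      ∃ hy : y ∈ Q.V, (underlyingGraph Q).Reachable x ⟨y, hy⟩ := by
    intro x y hxy
    induction hxy with
    | refl => exact ⟨x.2, .refl _⟩
    | @tail u v _ huv ih =>
      obtain ⟨hu, hxu⟩ := ih
      have hv : v ∈ Q.V := by
        obtain ⟨a, ha, ⟨-, rfl⟩ | ⟨rfl, -⟩⟩ := huv
        · exact (hends a ha).2
        · exact (hends a ha).1
      refine ⟨hv, hxu.trans ?_⟩
      rcases eq_or_ne u v with rfl | hne
      · exact .refl _
      · exact SimpleGraph.Adj.reachable <| (SimpleGraph.fromRel_adj _ _ _).2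
          ⟨Subtype.coe_ne_coe.1 hne, Or.inl huv⟩
  have := hV.to_subtype
  exact ⟨fun x y => (hreach x y (hQ x x.2 y y.2)).2⟩

lemma IsGentle.card_V_le_card_A_add_one (hg : IsGentle Q) : Q.V.card ≤ Q.A.card + 1 := by
  have hcard :=
    (connected_underlyingGraph hg.1 hg.2.1 hg.connected).card_vert_le_card_edgeSet_add_one
  have hedges := ncard_edgeSet_underlyingGraph_le Q
  rw [Nat.card_eq_fintype_card, Fintype.card_coe, Nat.card_coe_set_eq] at hcard
  omega

end Triangle

section TriangleCut

variable {Q : QuivRel} {a b c : ℕ}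

open Classical in
/-- A transversal of the triangles of a gentle quiver: from each of them its smallest arrow, arrows
being natural numbers. -/
noncomputable def triangleCut (Q : QuivRel) : Finset ℕ :=
  {a ∈ Q.A | ∃ b c, IsTriangleTriple Q a b c ∧ a < b ∧ a < c}

lemma mem_triangleCut : a ∈ triangleCut Q ↔ ∃ b c, IsTriangleTriple Q a b c ∧ a < b ∧ a < c := by
  simp only [triangleCut, Finset.mem_filter]
  exact and_iff_right_of_imp fun ⟨_, _, h, _⟩ => h.1.1

lemma triangleCut_subset (Q : QuivRel) : triangleCut Q ⊆ Q.A := fun _ ha =>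
  have ⟨_, _, h, _⟩ := mem_triangleCut.1 ha
  h.1.1

lemma IsTriangleTriple.mem_triangleCut_iff (hg : IsGentle Q) (h : IsTriangleTriple Q a b c) :
    a ∈ triangleCut Q ↔ a < b ∧ a < c := by
  refine mem_triangleCut.trans ⟨?_, fun hlt => ⟨b, c, h, hlt⟩⟩
  rintro ⟨b', c', h', hlt⟩
  obtain ⟨rfl, rfl⟩ := h.eq_and_eq hg h'
  exact hlt

lemma IsTriangleTriple.exists_mem_triangleCut (hg : IsGentle Q) (h : IsTriangleTriple Q a b c) :
    a ∈ triangleCut Q ∨ b ∈ triangleCut Q ∨ c ∈ triangleCut Q := by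
  obtain ⟨-, -, -, hab, hbc, hac, -⟩ := h.1
  rw [h.mem_triangleCut_iff hg, h.rotate.mem_triangleCut_iff hg,
    h.rotate.rotate.mem_triangleCut_iff hg]
  omega

lemma IsTriangleTriple.notMem_triangleCut (hg : IsGentle Q) (h : IsTriangleTriple Q a b c)
    (ha : a ∈ triangleCut Q) : b ∉ triangleCut Q ∧ c ∉ triangleCut Q := by
  rw [h.mem_triangleCut_iff hg] at ha
  rw [h.rotate.mem_triangleCut_iff hg, h.rotate.rotate.mem_triangleCut_iff hg]
  omega

lemma IsGentle.connected_deleteArrows_triangleCut (hg : IsGentle Q) :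
    Connected (deleteArrows Q (triangleCut Q)) := by
  refine hg.connected.deleteArrows_of_reflTransGen fun a _ ha => ?_
  obtain ⟨b, c, h, -⟩ := mem_triangleCut.1 ha
  obtain ⟨hb, hc⟩ := h.notMem_triangleCut hg ha
  exact h.reflTransGen_deleteArrows hb hc

lemma IsGentle.card_V_add_card_triangleCut_le (hg : IsGentle Q) :
    Q.V.card + (triangleCut Q).card ≤ Q.A.card + 1 := by
  have hcard : Q.V.card ≤ (Q.A \ triangleCut Q).card + 1 :=
    (hg.deleteArrows_of_connected hg.connected_deleteArrows_triangleCut).card_V_le_card_A_add_one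
  have := Finset.card_sdiff_add_card_eq_card (triangleCut_subset Q)
  omega

lemma triangleCut_subset_triangleCut_deleteArrows (h : ∀ b c, ¬ IsTriangleTriple Q a b c) :
    triangleCut Q ⊆ triangleCut (deleteArrows Q {a}) := by
  intro x hx
  obtain ⟨y, z, hxyz, hlt⟩ := mem_triangleCut.1 hx
  refine mem_triangleCut.2 ⟨y, z, isTriangleTriple_deleteArrows_iff.2 ⟨hxyz, ?_⟩, hlt⟩
  simp only [Finset.mem_singleton]
  refine ⟨?_, ?_, ?_⟩ <;> rintro rfl
  exacts [h _ _ hxyz, h _ _ hxyz.rotate, h _ _ hxyz.rotate.rotate]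

end TriangleCut

/-! ### The class `𝒜` -/

section ClassA

variable {Q : QuivRel} {st : SigmaTau Q} {a b : ℕ} {w : Thread}

lemma psiRel_iff (hg : IsGentle Q) :
    PsiRel Q st a b ↔ InC Q st a ∧ InC Q st b ∧ (a, b) ∈ Q.rel := by
  simp only [PsiRel, st.rel_iff_of_isGentle hg, eq_comm (a := Q.tgt b), eq_comm (a := st.τ b)]
  exact ⟨fun ⟨ha, hb, h⟩ => ⟨ha, hb, ha.1, hb.1, h⟩, fun ⟨ha, hb, _, _, h⟩ => ⟨ha, hb, h⟩⟩

lemma setOf_cOrbit (Q : QuivRel) (st : SigmaTau Q) :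
    {O | COrbit Q st O} = eqvClass (PsiRel Q st) '' {a | InC Q st a} :=
  Set.ext fun _ => exists_congr fun _ => and_congr_right fun _ => eq_comm

lemma setOf_nOrbit (Q : QuivRel) (st : SigmaTau Q) :
    {O | NOrbit Q st O} = eqvClass (PhiRel Q st) '' {w | InN Q st w} :=
  Set.ext fun _ => exists_congr fun _ => and_congr_right fun _ => eq_comm

lemma InC.eqvClass_psiRel_subset (ha : InC Q st a) : eqvClass (PsiRel Q st) a ⊆ {b | InC Q st b} :=
  eqvClass_subset (fun _ _ h => iff_of_true h.1 h.2.1) ha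

lemma InN.eqvClass_phiRel_subset (hw : InN Q st w) : eqvClass (PhiRel Q st) w ⊆ {w | InN Q st w} :=
  eqvClass_subset (fun _ _ h => iff_of_true h.1 h.2.1) hw

lemma finite_setOf_cOrbit (st : SigmaTau Q) : {O | COrbit Q st O}.Finite :=
  setOf_cOrbit Q st ▸ (finite_setOf_inC st).image _

lemma finite_setOf_nOrbit (hg : IsGentle Q) (st : SigmaTau Q) : {O | NOrbit Q st O}.Finite :=
  setOf_nOrbit Q st ▸ (finite_setOf_inN hg st).image _

lemma NOrbit.pN_ne_zero (hg : IsGentle Q) {O : Set Thread} (hO : NOrbit Q st O) : pN O ≠ 0 := by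
  obtain ⟨w, hw, rfl⟩ := hO
  exact Set.ncard_ne_zero_of_mem (mem_eqvClass_self w)
    ((finite_setOf_inN hg st).subset hw.eqvClass_phiRel_subset)

lemma fInv_zero (hg : IsGentle Q) (st : SigmaTau Q) (q : ℕ) :
    fInv Q st (0, q) = {O | COrbit Q st O ∧ O.ncard = q}.ncard := by
  have hempty : {O | NOrbit Q st O ∧ pN O = 0 ∧ qN O = q} = ∅ :=
    Set.eq_empty_of_forall_notMem fun _ hO => hO.1.pN_ne_zero hg hO.2.1
  simp only [fInv, hempty, Set.ncard_empty, zero_add, true_and]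

lemma fInv_of_ne_zero (st : SigmaTau Q) {p : ℕ} (hp : p ≠ 0) (q : ℕ) :
    fInv Q st (p, q) = {O | NOrbit Q st O ∧ (pN O, qN O) = (p, q)}.ncard := by
  simp [fInv, hp]

lemma ncard_setOf_cOrbit_of_fInv_eq (hg : IsGentle Q) {m p : ℕ}
    (hf : ∀ x, fInv Q st x = m * charFn 0 3 x + charFn (p + m + 2) p x) :
    {O | COrbit Q st O}.ncard = m ∧ ∀ O, COrbit Q st O → O.ncard = 3 := by
  refine ncard_eq_of_ncard_fiber (finite_setOf_cOrbit st) ?_ fun q hq => ?_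
  · simpa [charFn] using (fInv_zero hg st 3).symm.trans (hf _)
  · simpa [charFn, hq] using (fInv_zero hg st q).symm.trans (hf _)

lemma ncard_setOf_nOrbit_of_fInv_eq (hg : IsGentle Q) {m p : ℕ}
    (hf : ∀ x, fInv Q st x = m * charFn 0 3 x + charFn (p + m + 2) p x) :
    {O | NOrbit Q st O}.ncard = 1 ∧
      ∀ O, NOrbit Q st O → (pN O, qN O) = (p + m + 2, p) := by
  refine ncard_eq_of_ncard_fiber (finite_setOf_nOrbit hg st) ?_ fun ⟨u, q⟩ huq => ?_
  · simpa [charFn] using (fInv_of_ne_zero st (Nat.succ_ne_zero (p + m + 1)) p).symm.trans (hf _)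
  · rcases eq_or_ne u 0 with rfl | hu
    · have hempty : {O | NOrbit Q st O ∧ (pN O, qN O) = (0, q)} = ∅ :=
        Set.eq_empty_of_forall_notMem fun _ hO => hO.1.pN_ne_zero hg (congrArg Prod.fst hO.2)
      exact hempty ▸ Set.ncard_empty _
    · have := (fInv_of_ne_zero st hu q).symm.trans (hf _)
      rw [charFn, charFn, if_neg huq, if_neg (by simp [hu])] at this
      simpa using this

lemma nOrbit_setOf_inN_of_ncard_eq_one (h : {O | NOrbit Q st O}.ncard = 1) :
    NOrbit Q st {w | InN Q st w} := by
  obtain ⟨O, hO⟩ := Set.ncard_eq_one.1 h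
  have hOrbit : NOrbit Q st O := hO.ge rfl
  suffices h : O = {w | InN Q st w} from h ▸ hOrbit
  refine Set.Subset.antisymm ?_ fun w hw => ?_
  · obtain ⟨w, hw, rfl⟩ := hOrbit
    exact hw.eqvClass_phiRel_subset
  · have hw' : eqvClass (PhiRel Q st) w = O := hO.le ⟨w, hw, rfl⟩
    exact hw' ▸ mem_eqvClass_self w

lemma InC.exists_isTriangleTriple (hg : IsGentle Q) (ha : InC Q st a)
    (hcard : (eqvClass (PsiRel Q st) a).ncard = 3) :
    ∃ b ∈ eqvClass (PsiRel Q st) a, ∃ c ∈ eqvClass (PsiRel Q st) a,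
      IsTriangleTriple Q a b c := by
  obtain ⟨b, c, hab, hbc, hca, hne⟩ :=
    exists_three_cycle_of_ncard_eqvClass (r := PsiRel Q st)
      (fun _ _ _ h h' => hg.rel_leftUnique ((psiRel_iff hg).1 h).2.2 ((psiRel_iff hg).1 h').2.2)
      (fun _ _ _ h h' => hg.rel_rightUnique ((psiRel_iff hg).1 h).2.2 ((psiRel_iff hg).1 h').2.2)
      (fun x hx => by
        obtain ⟨y, hy, hxy⟩ := (ha.eqvClass_psiRel_subset hx).exists_rel hg
        exact ⟨y, (psiRel_iff hg).2 ⟨ha.eqvClass_psiRel_subset hx, hy, hxy⟩⟩) hcard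
  exact ⟨b, .rel _ _ hab, c, .symm _ _ (.rel _ _ hca), hg.isTriangleTriple
    ((psiRel_iff hg).1 hab).2.2 ((psiRel_iff hg).1 hbc).2.2 ((psiRel_iff hg).1 hca).2.2 hne⟩

lemma ncard_setOf_cOrbit_le_card_triangleCut (hg : IsGentle Q)
    (hC : ∀ O, COrbit Q st O → O.ncard = 3) :
    {O | COrbit Q st O}.ncard ≤ (triangleCut Q).card := by
  have hsub : {O | COrbit Q st O} ⊆ eqvClass (PsiRel Q st) '' triangleCut Q := by
    rintro _ ⟨a, ha, rfl⟩
    obtain ⟨b, hb, c, hc, h⟩ := ha.exists_isTriangleTriple hg (hC _ ⟨a, ha, rfl⟩)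
    rcases h.exists_mem_triangleCut hg with h | h | h
    exacts [⟨a, h, rfl⟩, ⟨b, h, eqvClass_eq_of_mem hb⟩, ⟨c, h, eqvClass_eq_of_mem hc⟩]
  calc {O | COrbit Q st O}.ncard
    _ ≤ (eqvClass (PsiRel Q st) '' triangleCut Q).ncard :=
      Set.ncard_le_ncard hsub ((triangleCut Q).finite_toSet.image _)
    _ ≤ (triangleCut Q).card := by
      rw [← Set.ncard_coe_finset]
      exact Set.ncard_image_le (triangleCut Q).finite_toSet

lemma ClassA.card_A_add_one_le (hA : ClassA Q st) :
    Q.A.card + 1 ≤ Q.V.card + (triangleCut Q).card := by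
  obtain ⟨hg, m, p, hf⟩ := hA
  obtain ⟨hm, hC⟩ := ncard_setOf_cOrbit_of_fInv_eq hg hf
  obtain ⟨hone, hN⟩ := ncard_setOf_nOrbit_of_fInv_eq hg hf
  obtain ⟨hpN, hqN⟩ := Prod.mk.inj (hN _ (nOrbit_setOf_inN_of_ncard_eq_one hone))
  have hC_card : {a | InC Q st a}.ncard ≤ 3 * m := by
    rw [← hm, setOf_cOrbit]
    exact ncard_le_mul_ncard_image_eqvClass (finite_setOf_inC st)
      (fun a ha => InC.eqvClass_psiRel_subset ha) fun a ha => (hC _ ⟨a, ha, rfl⟩).le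
  have hm_le := ncard_setOf_cOrbit_le_card_triangleCut hg hC
  have hvert : {w | InN Q st w}.ncard + Q.A.card ≤ 2 * Q.V.card :=
    ncard_setOf_inN_add_card_A_le hg st
  have harr : Q.A.card ≤ {a | InC Q st a}.ncard + ∑ᶠ w ∈ {w | InN Q st w}, w.len :=
    card_A_le_ncard_setOf_inC_add hg st
  rw [pN] at hpN
  rw [qN] at hqN
  omega

lemma ClassA.exists_isTriangleTriple_of_not_branchArrow (hA : ClassA Q st) (ha : a ∈ Q.A)
    (hbr : ¬ BranchArrow Q a) : ∃ b c, IsTriangleTriple Q a b c := by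
  by_contra! hno
  have hconn : Connected (deleteArrows Q {a}) := by_contra fun h => hbr ⟨ha, h⟩
  have hlower := (hA.1.deleteArrows_of_connected hconn).card_V_add_card_triangleCut_le
  have hupper := hA.card_A_add_one_le
  have hcut := Finset.card_le_card (triangleCut_subset_triangleCut_deleteArrows hno)
  have hdel := Finset.card_sdiff_add_card_eq_card (Finset.singleton_subset_iff.2 ha)
  simp only [deleteArrows, Finset.card_singleton] at hlower hdel hcut
  omega

lemma ClassA.treeType_deleteArrows_triangleCut (hA : ClassA Q st) :
    TreeType (deleteArrows Q (triangleCut Q)) := by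
  have hlower := hA.1.card_V_add_card_triangleCut_le
  have hupper := hA.card_A_add_one_le
  have hdel := Finset.card_sdiff_add_card_eq_card (triangleCut_subset Q)
  simp only [TreeType, deleteArrows]
  omega

end ClassA

/-! ### Completion of relations -/

section Completion

variable {Q Q' : QuivRel} {st : SigmaTau Q} {R₀ : Finset (ℕ × ℕ)} {γ : ℕ × ℕ → ℕ} {a b : ℕ}

/-- Every relation of the quiver belongs to a triangle: this mediates between the absence of branch
relations, equivalent to it on the class `𝒜`, and completions, which always have this property. -/
def RelsInTriangles (Q : QuivRel) : Prop :=
  ∀ a b, (a, b) ∈ Q.rel → ∃ c, IsTriangleTriple Q a b c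

lemma RelsInTriangles.not_branchRel (h : RelsInTriangles Q) (hQ : Connected Q) (ρ : ℕ × ℕ) :
    ¬ BranchRel Q ρ := by
  rintro ⟨hρ, hbr⟩
  obtain ⟨c, hc⟩ := h ρ.1 ρ.2 hρ
  exact hbr.elim (hc.not_branchArrow hQ) (hc.rotate.not_branchArrow hQ)

lemma ClassA.relsInTriangles (hA : ClassA Q st) (h : ∀ ρ, ¬ BranchRel Q ρ) :
    RelsInTriangles Q := by
  intro a b hab
  obtain ⟨b', c, habc⟩ := hA.exists_isTriangleTriple_of_not_branchArrow
    (hA.1.mem_and_mem_and_src_eq_of_rel hab).1 fun ha => h (a, b) ⟨hab, Or.inl ha⟩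
  obtain rfl := hA.1.rel_rightUnique hab habc.2.1
  exact ⟨c, habc⟩

lemma RelsInTriangles.of_isoQR (hg : IsGentle Q') (hQ : RelsInTriangles Q) (h : IsoQR Q Q') :
    RelsInTriangles Q' := by
  obtain ⟨fV, fA, -, hfA, -, hrel⟩ := h
  intro a b hab
  obtain ⟨haQ', hbQ', -⟩ := hg.mem_and_mem_and_src_eq_of_rel hab
  obtain ⟨a, ha, rfl⟩ := hfA.surjOn haQ'
  obtain ⟨b, hb, rfl⟩ := hfA.surjOn hbQ'
  obtain ⟨c, ⟨-, -, hc, hne_ab, hne_bc, hne_ac, -⟩, -, hbc, hca⟩ :=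
    hQ a b ((hrel a ha b hb).2 hab)
  exact ⟨fA c, hg.isTriangleTriple hab ((hrel b hb c hc).1 hbc) ((hrel c hc a ha).1 hca)
    ⟨hfA.injOn.ne ha hb hne_ab, hfA.injOn.ne hb hc hne_bc, hfA.injOn.ne ha hc hne_ac⟩⟩

lemma isolated_iff (hg : IsGentle Q) :
    Isolated Q st (a, b) ↔ (a, b) ∈ Q.rel ∧ (∀ x, (x, a) ∉ Q.rel) ∧ ∀ x, (b, x) ∉ Q.rel := by
  refine and_congr_right fun hab => ?_
  obtain ⟨ha, hb, -⟩ := hg.mem_and_mem_and_src_eq_of_rel hab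
  have hanti : IsAntiList Q [a, b] := ⟨by simp, by simp [ha, hb], List.isChain_pair.2 hab⟩
  simp [inN_arrows_iff hg, hanti]

lemma IsCompletion.isTriangleTriple (hg : IsGentle Q) (h : IsCompletion Q R₀ γ Q')
    (hab : (a, b) ∈ R₀) (hne : a ≠ b) : IsTriangleTriple Q' a b (γ (a, b)) := by
  obtain ⟨ha, hb, hsrc⟩ := hg.mem_and_mem_and_src_eq_of_rel (h.subset hab)
  have hfresh := h.fresh _ hab
  have hrel : (a, b) ∈ Q'.rel ∧ (b, γ (a, b)) ∈ Q'.rel ∧ (γ (a, b), a) ∈ Q'.rel := by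
    simp only [h.rel_eq, Finset.mem_union]
    exact ⟨.inl (.inl (h.subset hab)), .inr (Finset.mem_image_of_mem _ hab),
      .inl (.inr (Finset.mem_image_of_mem _ hab))⟩
  refine ⟨⟨?_, ?_, ?_, hne, ne_of_mem_of_not_mem hb hfresh, ne_of_mem_of_not_mem ha hfresh,
    ?_, ?_, ?_⟩, hrel⟩
  · exact h.A_eq ▸ Finset.mem_union_left _ ha
  · exact h.A_eq ▸ Finset.mem_union_left _ hb
  · exact h.A_eq ▸ Finset.mem_union_right _ (Finset.mem_image_of_mem _ hab)
  · rw [h.src_old a ha, h.tgt_old b hb, hsrc]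
  · rw [h.src_old b hb, h.tgt_new _ hab]
  · rw [h.src_new _ hab, h.tgt_old a ha]

lemma IsCompletion.relsInTriangles (hg : IsGentle Q) (hiso : ∀ ρ ∈ Q.rel, Isolated Q st ρ)
    (h : IsCompletion Q Q.rel γ Q') : RelsInTriangles Q' := by
  have htri : ∀ a b, (a, b) ∈ Q.rel → IsTriangleTriple Q' a b (γ (a, b)) := by
    refine fun a b hab => h.isTriangleTriple hg hab ?_
    rintro rfl
    exact ((isolated_iff hg).1 (hiso _ hab)).2.1 a hab
  intro a b hab
  simp only [h.rel_eq, Finset.mem_union, Finset.mem_image, Prod.exists, Prod.mk.injEq] at hab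
  rcases hab with (hab | ⟨a, b, hab, rfl, rfl⟩) | ⟨a, b, hab, rfl, rfl⟩
  exacts [⟨_, htri a b hab⟩, ⟨_, (htri a b hab).rotate.rotate⟩, ⟨_, (htri a b hab).rotate⟩]

lemma mem_rel_deleteArrows_triangleCut_iff (hg : IsGentle Q) (h : RelsInTriangles Q) :
    (a, b) ∈ (deleteArrows Q (triangleCut Q)).rel ↔
      ∃ c ∈ triangleCut Q, IsTriangleTriple Q a b c := by
  refine Finset.mem_filter.trans ⟨fun ⟨hab, ha, hb⟩ => ?_, fun ⟨c, hc, habc⟩ => ?_⟩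
  · obtain ⟨c, habc⟩ := h a b hab
    exact ⟨c, ((habc.exists_mem_triangleCut hg).resolve_left ha).resolve_left hb, habc⟩
  · exact ⟨habc.2.1, habc.rotate.rotate.notMem_triangleCut hg hc⟩

lemma RelsInTriangles.isolated_deleteArrows_triangleCut (h : RelsInTriangles Q) (hg : IsGentle Q)
    (st' : SigmaTau (deleteArrows Q (triangleCut Q))) (ρ : ℕ × ℕ)
    (hρ : ρ ∈ (deleteArrows Q (triangleCut Q)).rel) : Isolated _ st' ρ := by
  obtain ⟨a, b⟩ := ρ
  obtain ⟨c, hc, -, -, hbc, hca⟩ := (mem_rel_deleteArrows_triangleCut_iff hg h).1 hρ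
  refine (isolated_iff (hg.deleteArrows_of_connected hg.connected_deleteArrows_triangleCut)).2
    ⟨hρ, fun x hx => ?_, fun x hx => ?_⟩
  · obtain ⟨hxa, hx, -⟩ := Finset.mem_filter.1 hx
    exact hx (hg.rel_leftUnique hca hxa ▸ hc)
  · obtain ⟨hbx, -, hx⟩ := Finset.mem_filter.1 hx
    exact hx (hg.rel_rightUnique hbc hbx ▸ hc)

lemma IsGentle.exists_forall_isTriangleTriple_eq (hg : IsGentle Q) :
    ∃ γ : ℕ × ℕ → ℕ, ∀ a b c, IsTriangleTriple Q a b c → γ (a, b) = c := by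
  classical
  refine ⟨fun ρ => if h : ∃ c, IsTriangleTriple Q ρ.1 ρ.2 c then h.choose else 0,
    fun a b c habc => ?_⟩
  have h : ∃ c, IsTriangleTriple Q a b c := ⟨c, habc⟩
  exact (dif_pos h).trans (h.choose_spec.eq_and_eq hg habc).2

lemma image_rel_deleteArrows_triangleCut (hg : IsGentle Q) (h : RelsInTriangles Q)
    (hγ : ∀ a b c, IsTriangleTriple Q a b c → γ (a, b) = c) :
    (deleteArrows Q (triangleCut Q)).rel.image γ = triangleCut Q := by
  ext c
  simp only [Finset.mem_image, Prod.exists, mem_rel_deleteArrows_triangleCut_iff hg h]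
  constructor
  · rintro ⟨a, b, ⟨c', hc', habc⟩, rfl⟩
    exact hγ a b c' habc ▸ hc'
  · intro hc
    obtain ⟨a, b, hcab, -⟩ := mem_triangleCut.1 hc
    exact ⟨a, b, ⟨c, hc, hcab.rotate⟩, hγ a b c hcab.rotate⟩

lemma RelsInTriangles.rel_eq_union (h : RelsInTriangles Q) (hg : IsGentle Q)
    (hγ : ∀ a b c, IsTriangleTriple Q a b c → γ (a, b) = c) :
    Q.rel = (deleteArrows Q (triangleCut Q)).rel ∪
      (deleteArrows Q (triangleCut Q)).rel.image (fun ρ => (γ ρ, ρ.1)) ∪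
      (deleteArrows Q (triangleCut Q)).rel.image (fun ρ => (ρ.2, γ ρ)) := by
  ext ⟨x, y⟩
  simp only [Finset.mem_union, Finset.mem_image, Prod.exists, Prod.mk.injEq,
    mem_rel_deleteArrows_triangleCut_iff hg h]
  constructor
  · intro hxy
    obtain ⟨z, hxyz⟩ := h x y hxy
    have hyzx := hxyz.rotate
    have hzxy := hyzx.rotate
    rcases hxyz.exists_mem_triangleCut hg with hx | hy | hz
    · exact .inl (.inr ⟨y, z, ⟨x, hx, hyzx⟩, hγ y z x hyzx, rfl⟩)
    · exact .inr ⟨z, x, ⟨y, hy, hzxy⟩, rfl, hγ z x y hzxy⟩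
    · exact .inl (.inl ⟨z, hz, hxyz⟩)
  · rintro ((⟨c, -, habc⟩ | ⟨a, b, ⟨c, -, habc⟩, rfl, rfl⟩) | ⟨a, b, ⟨c, -, habc⟩, rfl, rfl⟩)
    · exact habc.2.1
    · exact hγ a b c habc ▸ habc.2.2.2
    · exact hγ a b c habc ▸ habc.2.2.1

lemma RelsInTriangles.exists_isCompletion_deleteArrows_triangleCut (h : RelsInTriangles Q)
    (hg : IsGentle Q) :
    ∃ γ, IsCompletion (deleteArrows Q (triangleCut Q))
      (deleteArrows Q (triangleCut Q)).rel γ Q := by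
  obtain ⟨γ, hγ⟩ := hg.exists_forall_isTriangleTriple_eq
  have himage := image_rel_deleteArrows_triangleCut hg h hγ
  have htri : ∀ ρ ∈ (deleteArrows Q (triangleCut Q)).rel,
      IsTriangleTriple Q ρ.1 ρ.2 (γ ρ) := fun ρ hρ =>
    have ⟨c, _, hc⟩ := (mem_rel_deleteArrows_triangleCut_iff hg h).1 hρ
    hγ ρ.1 ρ.2 c hc ▸ hc
  refine ⟨γ, ?_⟩
  constructor
  case subset => exact subset_rfl
  case fresh =>
    intro ρ hρ hmem
    exact (Finset.mem_sdiff.1 hmem).2 (himage.le (Finset.mem_image_of_mem γ hρ))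
  case inj =>
    intro ρ hρ ρ' hρ' heq
    have hρ'_tri := heq ▸ (htri ρ' hρ').rotate.rotate
    exact Prod.ext_iff.2 ((htri ρ hρ).rotate.rotate.eq_and_eq hg hρ'_tri)
  case V_eq => rfl
  case A_eq =>
    rw [himage]
    exact (Finset.sdiff_union_of_subset (triangleCut_subset Q)).symm
  case src_old => exact fun _ _ => rfl
  case tgt_old => exact fun _ _ => rfl
  case src_new => exact fun ρ hρ => (hg.mem_and_mem_and_src_eq_of_rel (htri ρ hρ).2.2.2).2.2
  case tgt_new => exact fun ρ hρ => (hg.mem_and_mem_and_src_eq_of_rel (htri ρ hρ).2.2.1).2.2.symm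
  case rel_eq => exact h.rel_eq_union hg hγ

lemma IsoQR.refl (Q : QuivRel) : IsoQR Q Q :=
  ⟨id, id, Set.bijOn_id _, Set.bijOn_id _, fun _ _ => ⟨rfl, rfl⟩, fun _ _ _ _ => Iff.rfl⟩

end Completion

/-- For `𝚫 ∈ 𝒜`: `𝚫` has no branch relations iff `𝚫` is
isomorphic to the quiver obtained from a gentle quiver `𝚫''` of tree type, all
of whose relations are isolated, by completing all of its relations. -/
theorem stmt11 (Q : QuivRel) (st : SigmaTau Q) (hA : ClassA Q st) :
    (∀ ρ : ℕ × ℕ, ¬ BranchRel Q ρ) ↔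
      ∃ (Q'' Qc : QuivRel) (st'' : SigmaTau Q'') (γ : ℕ × ℕ → ℕ),
        IsGentle Q'' ∧ TreeType Q'' ∧
        (∀ ρ ∈ Q''.rel, Isolated Q'' st'' ρ) ∧
        IsCompletion Q'' Q''.rel γ Qc ∧ IsoQR Qc Q := by
  have hg := hA.1
  constructor
  · intro hbr
    have htri := hA.relsInTriangles hbr
    obtain ⟨γ, hγ⟩ := htri.exists_isCompletion_deleteArrows_triangleCut hg
    exact ⟨deleteArrows Q (triangleCut Q), Q, st.restrict _, γ,
      hg.deleteArrows_of_connected hg.connected_deleteArrows_triangleCut,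
      hA.treeType_deleteArrows_triangleCut, htri.isolated_deleteArrows_triangleCut hg _, hγ,
      .refl Q⟩
  · rintro ⟨Q'', Qc, st'', γ, hg'', -, hiso, hγ, hQ⟩
    exact ((hγ.relsInTriangles hg'' hiso).of_isoQR hg hQ).not_branchRel hg.connected

end GentleQuiv
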